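/- (Zlotnik inequality) Let T > 0 and suppose y ∈ W^{1,1}(0,T) solves the ODE y′(t) = g(y(t)) + b′(t) for a.e. t ∈ [0,T] with y(0) = y₀, where b ∈ W^{1,1}(0,T) and g ∈ C(ℝ) with lim_{ξ→+∞} g(ξ) = −∞. Assume there are positive constants N₀ and N₁ such that b(t₂) − b(t₁) ≤ N₀ + N₁(t₂ − t₁) for all 0 ≤ t₁ ≤ t₂ ≤ T, and let ξ* ∈ ℝ be a constant such that g(ξ) ≤ −N₁ for all ξ ≥ ξ*. Then y(t) ≤ max{y₀, ξ*} + N₀ < +∞ for all t ∈ [0,T]. -/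

import Mathlib

open MeasureTheory Filter Set
open scoped ENNReal NNReal

/-!
Let `s` be the last time before `t` at which `y s ≤ M = max (y 0) ξ*`. On `(s, t]` the solution
stays above `ξ*`, so the equation gives `y' ≤ b' - N₁` there, and integrating,
`y t ≤ y s + (b t - b s) - N₁ (t - s) ≤ M + N₀`.
-/

theorem exists_forall_mem_Ioc_lt_of_continuousOn {α β : Type*}
    [ConditionallyCompleteLinearOrder α] [TopologicalSpace α] [OrderTopology α]
    [LinearOrder β] [TopologicalSpace β] [ClosedIicTopology β]
    {f : α → β} {a t : α} {M : β} (hf : ContinuousOn f (Icc a t)) (hat : a ≤ t) (ha : f a ≤ M) :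
    ∃ s ∈ Icc a t, f s ≤ M ∧ ∀ r ∈ Ioc s t, M < f r := by
  have hcompact : IsCompact (Icc a t ∩ f ⁻¹' Iic M) :=
    isCompact_Icc.of_isClosed_subset
      (hf.preimage_isClosed_of_isClosed isClosed_Icc isClosed_Iic) inter_subset_left
  obtain ⟨s, ⟨hs, hsM⟩, hlast⟩ := hcompact.exists_isGreatest ⟨a, left_mem_Icc.2 hat, ha⟩
  refine ⟨s, hs, hsM, fun r hr => lt_of_not_ge fun hrM => ?_⟩
  exact hr.1.not_ge (hlast ⟨⟨hs.1.trans hr.1.le, hr.2⟩, hrM⟩)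

/-- `f` is an indefinite integral of the integrable function `f'` on `[a, b]`; this encodes
`f ∈ W^{1,1}(a, b)` with weak derivative `f'`, where `f` is the continuous representative. -/
structure IsIndefiniteIntegralOn {E : Type*} [NormedAddCommGroup E] [NormedSpace ℝ E]
    (f f' : ℝ → E) (a b : ℝ) : Prop where
  integrableOn : IntegrableOn f' (Icc a b)
  eq_add_integral : ∀ t ∈ Icc a b, f t = f a + ∫ s in a..t, f' s

namespace IsIndefiniteIntegralOn

section NormedSpace

variable {E : Type*} [NormedAddCommGroup E] [NormedSpace ℝ E] {f f' h h' : ℝ → E} {a b s t : ℝ}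

theorem intervalIntegrable (hf : IsIndefiniteIntegralOn f f' a b)
    (hs : s ∈ Icc a b) (ht : t ∈ Icc a b) : IntervalIntegrable f' volume s t :=
  (hf.integrableOn.mono_set (ordConnected_Icc.uIcc_subset hs ht)).intervalIntegrable

theorem integral_eq_sub (hf : IsIndefiniteIntegralOn f f' a b)
    (hs : s ∈ Icc a b) (ht : t ∈ Icc a b) : ∫ r in s..t, f' r = f t - f s := by
  have ha : a ∈ Icc a b := left_mem_Icc.2 (hs.1.trans hs.2)
  rw [hf.eq_add_integral t ht, hf.eq_add_integral s hs, add_sub_add_left_eq_sub,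
    intervalIntegral.integral_interval_sub_left (hf.intervalIntegrable ha ht)
      (hf.intervalIntegrable ha hs)]

theorem continuousOn (hf : IsIndefiniteIntegralOn f f' a b) : ContinuousOn f (Icc a b) := by
  rcases le_or_gt a b with hab | hba
  · have hprimitive : ContinuousOn (fun t => ∫ s in a..t, f' s) (Icc a b) := by
      rw [← uIcc_of_le hab]
      exact intervalIntegral.continuousOn_primitive_interval
        ((uIcc_of_le hab).symm ▸ hf.integrableOn)
    exact (continuousOn_const.add hprimitive).congr hf.eq_add_integral
  · simp only [Icc_eq_empty_of_lt hba, continuousOn_empty]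

theorem sub (hf : IsIndefiniteIntegralOn f f' a b) (hh : IsIndefiniteIntegralOn h h' a b) :
    IsIndefiniteIntegralOn (f - h) (f' - h') a b where
  integrableOn := hf.integrableOn.sub hh.integrableOn
  eq_add_integral t ht := by
    have ha : a ∈ Icc a b := left_mem_Icc.2 (ht.1.trans ht.2)
    simp only [Pi.sub_apply]
    rw [intervalIntegral.integral_sub (hf.intervalIntegrable ha ht) (hh.intervalIntegrable ha ht),
      hf.integral_eq_sub ha ht, hh.integral_eq_sub ha ht]
    abel

theorem smul_const [CompleteSpace E] (a b : ℝ) (v : E) :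
    IsIndefiniteIntegralOn (fun t => t • v) (fun _ => v) a b where
  integrableOn := continuousOn_const.integrableOn_Icc
  eq_add_integral t _ := by
    rw [intervalIntegral.integral_const, sub_smul, add_sub_cancel]

end NormedSpace

section Real

variable {f f' h h' : ℝ → ℝ} {a b s t ξ C : ℝ}

theorem sub_le_sub_of_ae_le (hf : IsIndefiniteIntegralOn f f' a b)
    (hh : IsIndefiniteIntegralOn h h' a b) (hs : s ∈ Icc a b) (ht : t ∈ Icc a b) (hst : s ≤ t)
    (hle : f' ≤ᵐ[volume.restrict (Ioc s t)] h') : f t - f s ≤ h t - h s := by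
  rw [← hf.integral_eq_sub hs ht, ← hh.integral_eq_sub hs ht]
  simp only [intervalIntegral.integral_of_le hst]
  exact integral_mono_ae (hf.intervalIntegrable hs ht).1 (hh.intervalIntegrable hs ht).1 hle

theorem le_max_add_of_ae_le (hf : IsIndefiniteIntegralOn f f' a b)
    (hh : IsIndefiniteIntegralOn h h' a b)
    (hle : ∀ᵐ t ∂volume.restrict (Icc a b), ξ ≤ f t → f' t ≤ h' t)
    (hC : ∀ s t, a ≤ s → s ≤ t → t ≤ b → h t - h s ≤ C) (ht : t ∈ Icc a b) :
    f t ≤ max (f a) ξ + C := by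
  obtain ⟨s, hs, hsM, habove⟩ := exists_forall_mem_Ioc_lt_of_continuousOn
    (hf.continuousOn.mono (Icc_subset_Icc_right ht.2)) ht.1 (le_max_left (f a) ξ)
  have hexcursion : f' ≤ᵐ[volume.restrict (Ioc s t)] h' := by
    have hsub : Ioc s t ⊆ Icc a b := Ioc_subset_Icc_self.trans (Icc_subset_Icc hs.1 ht.2)
    filter_upwards [ae_restrict_of_ae_restrict_of_subset hsub hle,
      ae_restrict_mem measurableSet_Ioc] with r hr hrst
    exact hr ((le_max_right _ _).trans (habove r hrst).le)
  have hgrowth : f t - f s ≤ h t - h s :=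
    hf.sub_le_sub_of_ae_le hh ⟨hs.1, hs.2.trans ht.2⟩ ht hs.2 hexcursion
  linarith [hC s t hs.1 hs.2 ht.2]

end Real

end IsIndefiniteIntegralOn

theorem stmt3_general {y y' b b' : ℝ → ℝ} {g : ℝ → ℝ → ℝ} {t₀ T N₀ N₁ ξ t : ℝ}
    (hy : IsIndefiniteIntegralOn y y' t₀ T) (hb : IsIndefiniteIntegralOn b b' t₀ T)
    (hode : ∀ᵐ t ∂volume.restrict (Icc t₀ T), y' t ≤ g t (y t) + b' t)
    (hbN : ∀ t₁ t₂, t₀ ≤ t₁ → t₁ ≤ t₂ → t₂ ≤ T → b t₂ - b t₁ ≤ N₀ + N₁ * (t₂ - t₁))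
    (hg : ∀ t ∈ Icc t₀ T, ∀ x, ξ ≤ x → g t x ≤ -N₁) (ht : t ∈ Icc t₀ T) :
    y t ≤ max (y t₀) ξ + N₀ := by
  refine hy.le_max_add_of_ae_le (hb.sub (.smul_const t₀ T N₁)) ?_ (fun t₁ t₂ h₁ h₁₂ h₂ => ?_) ht
  · filter_upwards [hode, ae_restrict_mem measurableSet_Icc] with r hr hrI hξ
    simp only [Pi.sub_apply]
    linarith [hg r hrI (y r) hξ]
  · simp only [Pi.sub_apply, smul_eq_mul]
    linarith [hbN t₁ t₂ h₁ h₁₂ h₂]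

/-- **Lemma 2.2, Zlotnik inequality.**
Suppose `y ∈ W^{1,1}(0,T)` solves `y′ = g(y) + b′` a.e. on `[0,T]` with
`b ∈ W^{1,1}(0,T)`, `g` continuous with `g(+∞) = −∞`.  If
`b(t₂) − b(t₁) ≤ N₀ + N₁(t₂ − t₁)` for all `0 ≤ t₁ ≤ t₂ ≤ T` with `N₀, N₁ > 0`, and
`ξ* ∈ ℝ` satisfies `g(ξ) ≤ −N₁` for all `ξ ≥ ξ*`, then
`y(t) ≤ max{y₀, ξ*} + N₀ < +∞` on `[0,T]`.
(`W^{1,1}` functions are encoded as indefinite integrals of their integrable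
derivatives `yd`, `bd`.) -/
theorem stmt3 (T : ℝ) (hT : 0 < T) (y b yd bd : ℝ → ℝ) (g : ℝ → ℝ) (N0 N1 ξs : ℝ)
    (hg : Continuous g) (hgtop : Tendsto g atTop atBot)
    (hyd : IntegrableOn yd (Icc 0 T)) (hbd : IntegrableOn bd (Icc 0 T))
    (hy : ∀ t ∈ Icc (0:ℝ) T, y t = y 0 + ∫ s in (0:ℝ)..t, yd s)
    (hb : ∀ t ∈ Icc (0:ℝ) T, b t = b 0 + ∫ s in (0:ℝ)..t, bd s)
    (hode : ∀ᵐ t ∂(volume.restrict (Icc (0:ℝ) T)), yd t = g (y t) + bd t)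
    (hN0 : 0 < N0) (hN1 : 0 < N1)
    (hbb : ∀ t1 t2 : ℝ, 0 ≤ t1 → t1 ≤ t2 → t2 ≤ T → b t2 - b t1 ≤ N0 + N1 * (t2 - t1))
    (hxi : ∀ ξ : ℝ, ξs ≤ ξ → g ξ ≤ -N1) :
    ∀ t ∈ Icc (0:ℝ) T, y t ≤ max (y 0) ξs + N0 := by
  intro t ht
  exact stmt3_general (g := fun _ => g) ⟨hyd, hy⟩ ⟨hbd, hb⟩ (hode.mono fun _ h => h.le) hbb
    (fun _ _ => hxi) ht
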